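/- Let T be a finite nonempty set of diffusion times, π a probability distribution on T (the time prior), and for each t ∈ T let α_t ∈ [0,1] be the retention probability at time t, with Σ_{s ∈ T} π(s) α_s^d > 0. Let q_0 be a probability distribution on X and define the time-t marginal q_t on X̃ by q_t(x̃) = Σ_{x_0 ∈ X} q_0(x_0) q_{α_t}(x̃ | x_0). For a clean sample x ∈ X with q_0(x) > 0, define the DTE-style time posterior π(t | x) = π(t) q_t(ι(x)) / Σ_{s ∈ T} π(s) q_s(ι(x)). Then π(t | x) = π(t) α_t^d / Σ_{s ∈ T} π(s) α_s^d for every t ∈ T; in particular the posterior is identical for all clean samples x with q_0(x) > 0 and carries no dependence on x. -/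

import Mathlib

/-!
A clean view `embed x` has no masked coordinate, so the probe mask can produce it only from `x`
itself, and then only by retaining all `d` coordinates (`probeMask_embed`). Hence the marginal
factors as `q_t(ι(x)) = q₀(x) α_t ^ d` (`timeMarginal_embed`): the dependence on `x` and on `t`
separate, and the common factor `q₀(x) > 0` cancels between the numerator and the denominator of
the posterior.
-/

open Classical Finset

noncomputable section

/-- The space of masked views: each coordinate is either a visible value or the mask `none`. -/
abbrev MaskedView {d : ℕ} (X : Fin d → Type*) := (j : Fin d) → Option (X j)

/-- The probe-masking distribution `q_α(·|x)`: independently for each coordinate `j`,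
the view keeps `x j` with probability `α` and is masked with probability `1 - α`. -/
def probeMask {d : ℕ} {X : Fin d → Type*} [∀ j, DecidableEq (X j)]
    (α : ℝ) (x : (j : Fin d) → X j) (xt : MaskedView X) : ℝ :=
  ∏ j, if xt j = some (x j) then α else if xt j = none then 1 - α else 0

/-- Coordinatewise embedding of a clean sample as the all-visible masked view. -/
def embed {d : ℕ} {X : Fin d → Type*} (x : (j : Fin d) → X j) : MaskedView X :=
  fun j => some (x j)

/-- The time-`t` marginal `q_t` on masked views of a `q₀`-distributed clean sample. -/
def timeMarginal {d : ℕ} {X : Fin d → Type*} [∀ j, Fintype (X j)] [∀ j, DecidableEq (X j)]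
    (q0 : ((j : Fin d) → X j) → ℝ) (αt : ℝ) (xt : MaskedView X) : ℝ :=
  ∑ x0, q0 x0 * probeMask αt x0 xt

theorem probeMask_embed {d : ℕ} {X : Fin d → Type*} [∀ j, DecidableEq (X j)]
    (a : ℝ) (x0 x : (j : Fin d) → X j) :
    probeMask a x0 (embed x) = if x0 = x then a ^ d else 0 := by
  split_ifs with h
  · subst h
    simp [probeMask, embed]
  · obtain ⟨j, hj⟩ := Function.ne_iff.mp h
    exact Finset.prod_eq_zero (Finset.mem_univ j) (by simp [embed, hj.symm])

theorem timeMarginal_embed {d : ℕ} {X : Fin d → Type*} [∀ j, Fintype (X j)]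
    [∀ j, DecidableEq (X j)] (q0 : ((j : Fin d) → X j) → ℝ) (a : ℝ) (x : (j : Fin d) → X j) :
    timeMarginal q0 a (embed x) = q0 x * a ^ d := by
  simp [timeMarginal, probeMask_embed]

/-- **Degeneracy of the DTE-style time posterior under masked diffusion** (Remark 3.1):
for any clean sample `x` with `q₀(x) > 0`, the DTE posterior
`π(t|x) = π(t) q_t(ι(x)) / Σ_s π(s) q_s(ι(x))` equals `π(t) α_t^d / Σ_s π(s) α_s^d`, which is
the same for every clean sample and hence carries no dependence on `x`. -/
theorem dte_posterior_degenerate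
    {d : ℕ} (hd : 1 ≤ d)
    {X : Fin d → Type*} [∀ j, Fintype (X j)] [∀ j, Nonempty (X j)] [∀ j, DecidableEq (X j)]
    (T : Type*) [Fintype T] [Nonempty T]
    (π : T → ℝ) (hπ : ∀ t, 0 ≤ π t) (hπsum : ∑ t, π t = 1)
    (α : T → ℝ) (hα : ∀ t, α t ∈ Set.Icc (0 : ℝ) 1)
    (hpos : 0 < ∑ s, π s * α s ^ d)
    (q0 : ((j : Fin d) → X j) → ℝ)
    (hq0 : ∀ x, 0 ≤ q0 x) (hq0sum : ∑ x, q0 x = 1)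
    (x : (j : Fin d) → X j) (hx : 0 < q0 x) (t : T) :
    π t * timeMarginal q0 (α t) (embed x) /
        (∑ s, π s * timeMarginal q0 (α s) (embed x)) =
      π t * α t ^ d / ∑ s, π s * α s ^ d := by
  simp only [timeMarginal_embed, mul_left_comm _ (q0 x), ← Finset.mul_sum]
  exact mul_div_mul_left _ _ hx.ne'

end
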